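/- arXiv:2502.12431 — 6 statements merged into one kernel-verified Lean document; each statement's English description precedes it below -/
import Mathlib

section
/- For any two-sided strategy-proof randomized matching mechanism f, there exists a randomized matching mechanism g that is two-sided strategy-proof and anonymous and satisfies Σ_{≻∈P} V(g(≻),≻) ≤ Σ_{≻∈P} V(f(≻),≻), where V(r,≻) denotes the stability violation of r at profile ≻. -/
/-!
Average `f` over all ways of renaming the agents, running `f`, and renaming the outcome back.
Renaming is a symmetry of the whole problem, so each term of the average is as good as `f`: it is
strategy-proof, and, since renaming permutes the profiles, its total violation is that of `f`.
Randomized matchings and strategy-proof mechanisms form convex sets and the total violation is a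
convex function, so the average inherits these properties; renaming the agents only permutes its
terms, so it is anonymous.
-/

open Finset

/-- A preference profile: each student `s` has a ranking `p.1 s : Equiv.Perm (Fin m)`
(where `p.1 s c` is the rank student `s` gives to school `c`, lower rank = more preferred),
and each school `c` has a ranking `p.2 c` of the students (lower rank = more preferred). -/
abbrev Profile (n m : ℕ) :=
  (Fin n → Equiv.Perm (Fin m)) × (Fin m → Equiv.Perm (Fin n))

/-- A randomized matching: nonnegative entries, and (accounting for the implicit `∅`
row/column each summing to one) every row and column sums to at most one. -/
def IsRandMatching {n m : ℕ} (r : Fin n → Fin m → ℝ) : Prop :=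
  (∀ s c, 0 ≤ r s c) ∧ (∀ s, ∑ c, r s c ≤ 1) ∧ (∀ c, ∑ s, r s c ≤ 1)

/-- Stability violation of a randomized matching `r` at profile `p`. -/
def violation {n m : ℕ} (p : Profile n m) (r : Fin n → Fin m → ℝ) : ℝ :=
  ∑ s, ∑ c,
    max (1 - r s c
      - ∑ c' ∈ univ.filter (fun c' => p.1 s c' < p.1 s c), r s c'
      - ∑ s' ∈ univ.filter (fun s' => p.2 c s' < p.2 c s), r s' c) 0

/-- Two-sided strategy-proofness of a randomized matching mechanism. -/
def TwoSidedSP {n m : ℕ} (g : Profile n m → Fin n → Fin m → ℝ) : Prop :=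
  (∀ p : Profile n m, ∀ s : Fin n, ∀ q : Equiv.Perm (Fin m), ∀ c : Fin m,
    ∑ c' ∈ univ.filter (fun c' => p.1 s c' ≤ p.1 s c),
        g (Function.update p.1 s q, p.2) s c'
      ≤ ∑ c' ∈ univ.filter (fun c' => p.1 s c' ≤ p.1 s c), g p s c') ∧
  (∀ p : Profile n m, ∀ c : Fin m, ∀ q : Equiv.Perm (Fin n), ∀ s : Fin n,
    ∑ s' ∈ univ.filter (fun s' => p.2 c s' ≤ p.2 c s),
        g (p.1, Function.update p.2 c q) s' c
      ≤ ∑ s' ∈ univ.filter (fun s' => p.2 c s' ≤ p.2 c s), g p s' c)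

/-- The relabelled profile `≻^π`: student `πS s` gets student `s`'s old preference with
schools renamed by `πC`, and school `πC c` gets school `c`'s old preference with students
renamed by `πS`. -/
def relabel {n m : ℕ} (πS : Equiv.Perm (Fin n)) (πC : Equiv.Perm (Fin m))
    (p : Profile n m) : Profile n m :=
  (fun i => πC.symm.trans (p.1 (πS.symm i)),
   fun j => πS.symm.trans (p.2 (πC.symm j)))

/-- Anonymity of a mechanism. -/
def Anonymous {n m : ℕ} (g : Profile n m → Fin n → Fin m → ℝ) : Prop :=
  ∀ p : Profile n m, ∀ πS : Equiv.Perm (Fin n), ∀ πC : Equiv.Perm (Fin m), ∀ s c,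
    g p s c = g (relabel πS πC p) (πS s) (πC c)

open scoped BigOperators

section Convexity

variable {𝕜 E ι : Type*}

lemma convex_expect_mem [Field 𝕜] [LinearOrder 𝕜] [IsStrictOrderedRing 𝕜] [AddCommGroup E]
    [Module 𝕜 E] [Module ℚ≥0 E] [Fintype ι] [Nonempty ι] {K : Set E} (hK : Convex 𝕜 K) {x : ι → E}
    (hx : ∀ i, x i ∈ K) : 𝔼 i, x i ∈ K := by
  have expect_eq : 𝔼 i, x i = ∑ i, (Fintype.card ι : 𝕜)⁻¹ • x i := by
    rw [expect_univ, ← smul_sum, ← NNRat.cast_smul_eq_nnqsmul 𝕜, NNRat.cast_inv, NNRat.cast_natCast]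
  rw [expect_eq]
  exact hK.sum_mem (fun _ _ => by positivity) (by simp) fun i _ => hx i

lemma convexOn_sum [Semiring 𝕜] [PartialOrder 𝕜] [AddCommMonoid E] [SMul 𝕜 E] {β : Type*}
    [AddCommMonoid β] [PartialOrder β] [IsOrderedAddMonoid β] [Module 𝕜 β] {K : Set E}
    (hK : Convex 𝕜 K) {t : Finset ι} {F : ι → E → β} (hF : ∀ i ∈ t, ConvexOn 𝕜 K (F i)) :
    ConvexOn 𝕜 K fun x => ∑ i ∈ t, F i x := by
  refine ⟨hK, fun x hx y hy a b ha hb hab => ?_⟩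
  rw [smul_sum, smul_sum, ← sum_add_distrib]
  exact sum_le_sum fun i hi => (hF i hi).2 hx hy ha hb hab

end Convexity

section Anonymization

variable {n m : ℕ}

lemma relabel_relabel (πS ρS : Equiv.Perm (Fin n)) (πC ρC : Equiv.Perm (Fin m))
    (p : Profile n m) : relabel πS πC (relabel ρS ρC p) = relabel (πS * ρS) (πC * ρC) p := rfl

lemma relabel_one (p : Profile n m) : relabel 1 1 p = p := rfl

lemma relabel_bijective (πS : Equiv.Perm (Fin n)) (πC : Equiv.Perm (Fin m)) :
    Function.Bijective (relabel πS πC) := by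
  refine Function.bijective_iff_has_inverse.mpr ⟨relabel πS⁻¹ πC⁻¹, fun p => ?_, fun p => ?_⟩
  · rw [relabel_relabel, inv_mul_cancel, inv_mul_cancel, relabel_one]
  · rw [relabel_relabel, mul_inv_cancel, mul_inv_cancel, relabel_one]

@[simp]
lemma relabel_fst_apply (πS : Equiv.Perm (Fin n)) (πC : Equiv.Perm (Fin m)) (p : Profile n m)
    (s : Fin n) (c : Fin m) : (relabel πS πC p).1 (πS s) (πC c) = p.1 s c := by
  simp [relabel]

@[simp]
lemma relabel_snd_apply (πS : Equiv.Perm (Fin n)) (πC : Equiv.Perm (Fin m)) (p : Profile n m)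
    (c : Fin m) (s : Fin n) : (relabel πS πC p).2 (πC c) (πS s) = p.2 c s := by
  simp [relabel]

lemma relabel_update_fst (πS : Equiv.Perm (Fin n)) (πC : Equiv.Perm (Fin m)) (p : Profile n m)
    (s : Fin n) (q : Equiv.Perm (Fin m)) :
    relabel πS πC (Function.update p.1 s q, p.2) =
      (Function.update (relabel πS πC p).1 (πS s) (πC.symm.trans q), (relabel πS πC p).2) := by
  refine Prod.ext (funext fun i => ?_) rfl
  simp only [relabel, Function.update_apply, Equiv.symm_apply_eq]
  split_ifs <;> rfl

lemma relabel_update_snd (πS : Equiv.Perm (Fin n)) (πC : Equiv.Perm (Fin m)) (p : Profile n m)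
    (c : Fin m) (q : Equiv.Perm (Fin n)) :
    relabel πS πC (p.1, Function.update p.2 c q) =
      ((relabel πS πC p).1, Function.update (relabel πS πC p).2 (πC c) (πS.symm.trans q)) := by
  refine Prod.ext rfl (funext fun j => ?_)
  simp only [relabel, Function.update_apply, Equiv.symm_apply_eq]
  split_ifs <;> rfl

lemma convex_isRandMatching : Convex ℝ {r : Fin n → Fin m → ℝ | IsRandMatching r} := by
  rintro r ⟨r_nonneg, r_row, r_col⟩ r' ⟨r'_nonneg, r'_row, r'_col⟩ a b ha hb hab
  refine ⟨fun s c => ?_, fun s => ?_, fun c => ?_⟩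
  · exact add_nonneg (mul_nonneg ha (r_nonneg s c)) (mul_nonneg hb (r'_nonneg s c))
  · simpa only [Pi.add_apply, Pi.smul_apply, smul_eq_mul, sum_add_distrib, mul_sum,
      Set.mem_Iic] using
        convex_Iic (1 : ℝ) (r_row s) (r'_row s) ha hb hab
  · simpa only [Pi.add_apply, Pi.smul_apply, smul_eq_mul, sum_add_distrib, mul_sum,
      Set.mem_Iic] using
        convex_Iic (1 : ℝ) (r_col c) (r'_col c) ha hb hab

lemma convex_twoSidedSP : Convex ℝ {g : Profile n m → Fin n → Fin m → ℝ | TwoSidedSP g} := by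
  rintro g ⟨g_students, g_schools⟩ g' ⟨g'_students, g'_schools⟩ a b ha hb -
  refine ⟨fun p s q c => ?_, fun p c q s => ?_⟩
  all_goals simp only [Pi.add_apply, Pi.smul_apply, smul_eq_mul, sum_add_distrib, ← mul_sum]
  · gcongr a * ?_ + b * ?_
    exacts [g_students p s q c, g'_students p s q c]
  · gcongr a * ?_ + b * ?_
    exacts [g_schools p c q s, g'_schools p c q s]

/-- The amount by which the pair `(s, c)` violates stability of `r` at `p`; negative values mean
that stability holds with room to spare. -/
def blockingExcess (p : Profile n m) (s : Fin n) (c : Fin m) (r : Fin n → Fin m → ℝ) : ℝ :=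
  1 - r s c - ∑ c' with p.1 s c' < p.1 s c, r s c' - ∑ s' with p.2 c s' < p.2 c s, r s' c

lemma violation_eq_sum_blockingExcess (p : Profile n m) (r : Fin n → Fin m → ℝ) :
    violation p r = ∑ s, ∑ c, max (blockingExcess p s c r) 0 := rfl

lemma convexOn_blockingExcess (p : Profile n m) (s : Fin n) (c : Fin m) :
    ConvexOn ℝ Set.univ (blockingExcess p s c) := by
  refine ⟨convex_univ, fun r _ r' _ a b _ _ hab => le_of_eq ?_⟩
  simp only [blockingExcess, Pi.add_apply, Pi.smul_apply, smul_eq_mul, sum_add_distrib, ← mul_sum]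
  linear_combination -hab

lemma convexOn_violation (p : Profile n m) : ConvexOn ℝ Set.univ (violation p) :=
  convexOn_sum convex_univ fun s _ => convexOn_sum convex_univ fun c _ =>
    (convexOn_blockingExcess p s c).sup (convexOn_const 0 convex_univ)

lemma convexOn_sum_violation :
    ConvexOn ℝ Set.univ fun g : Profile n m → Fin n → Fin m → ℝ => ∑ p, violation p (g p) :=
  convexOn_sum convex_univ fun p _ => (convexOn_violation p).comp_linearMap
    (LinearMap.proj p : (Profile n m → Fin n → Fin m → ℝ) →ₗ[ℝ] Fin n → Fin m → ℝ)

/-- The mechanism that renames the agents by `πS` and `πC`, runs `f`, and renames the outcome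
back. -/
def twist (πS : Equiv.Perm (Fin n)) (πC : Equiv.Perm (Fin m))
    (f : Profile n m → Fin n → Fin m → ℝ) : Profile n m → Fin n → Fin m → ℝ :=
  fun p s c => f (relabel πS πC p) (πS s) (πC c)

variable {f : Profile n m → Fin n → Fin m → ℝ}

lemma isRandMatching_twist (hf : ∀ p, IsRandMatching (f p)) (πS : Equiv.Perm (Fin n))
    (πC : Equiv.Perm (Fin m)) (p : Profile n m) : IsRandMatching (twist πS πC f p) := by
  obtain ⟨nonneg, row, col⟩ := hf (relabel πS πC p)
  exact ⟨fun s c => nonneg (πS s) (πC c),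
    fun s => (Equiv.sum_comp πC _).trans_le (row (πS s)),
    fun c => (Equiv.sum_comp πS (f (relabel πS πC p) · (πC c))).trans_le (col (πC c))⟩

lemma twoSidedSP_twist (hf : TwoSidedSP f) (πS : Equiv.Perm (Fin n)) (πC : Equiv.Perm (Fin m)) :
    TwoSidedSP (twist πS πC f) := by
  refine ⟨fun p s q c => ?_, fun p c q s => ?_⟩
  · have truthful := hf.1 (relabel πS πC p) (πS s) (πC.symm.trans q) (πC c)
    rw [← relabel_update_fst] at truthful
    convert truthful using 1 <;> exact sum_equiv πC (by simp) fun _ _ => rfl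
  · have truthful := hf.2 (relabel πS πC p) (πC c) (πS.symm.trans q) (πS s)
    rw [← relabel_update_snd] at truthful
    convert truthful using 1 <;> exact sum_equiv πS (by simp) fun _ _ => rfl

lemma blockingExcess_relabel (πS : Equiv.Perm (Fin n)) (πC : Equiv.Perm (Fin m))
    (p : Profile n m) (s : Fin n) (c : Fin m) (r : Fin n → Fin m → ℝ) :
    blockingExcess (relabel πS πC p) (πS s) (πC c) r =
      blockingExcess p s c fun s c => r (πS s) (πC c) := by
  unfold blockingExcess
  congr 1
  · congr 1
    exact (sum_equiv πC (by simp) fun _ _ => rfl).symm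
  · exact (sum_equiv πS (by simp) fun _ _ => rfl).symm

lemma violation_relabel (πS : Equiv.Perm (Fin n)) (πC : Equiv.Perm (Fin m)) (p : Profile n m)
    (r : Fin n → Fin m → ℝ) :
    violation (relabel πS πC p) r = violation p fun s c => r (πS s) (πC c) := by
  simp only [violation_eq_sum_blockingExcess, ← blockingExcess_relabel]
  rw [← Equiv.sum_comp πS]
  exact sum_congr rfl fun s _ => (Equiv.sum_comp πC _).symm

lemma sum_violation_twist (πS : Equiv.Perm (Fin n)) (πC : Equiv.Perm (Fin m))
    (f : Profile n m → Fin n → Fin m → ℝ) :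
    ∑ p, violation p (twist πS πC f p) = ∑ p, violation p (f p) := by
  rw [← (relabel_bijective πS πC).sum_comp fun p => violation p (f p)]
  exact sum_congr rfl fun p _ => (violation_relabel πS πC p _).symm

/-- The anonymization of `f`: its average over all renamings of the agents. -/
noncomputable def anonymize (f : Profile n m → Fin n → Fin m → ℝ) :
    Profile n m → Fin n → Fin m → ℝ :=
  𝔼 π : Equiv.Perm (Fin n) × Equiv.Perm (Fin m), twist π.1 π.2 f

lemma anonymize_mem {K : Set (Profile n m → Fin n → Fin m → ℝ)} (hK : Convex ℝ K)
    (hf : ∀ πS πC, twist πS πC f ∈ K) : anonymize f ∈ K :=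
  convex_expect_mem hK fun π => hf π.1 π.2

lemma anonymous_anonymize (f : Profile n m → Fin n → Fin m → ℝ) : Anonymous (anonymize f) := by
  intro p πS πC s c
  simp only [anonymize, expect_apply]
  exact (Fintype.expect_equiv (Equiv.mulRight (πS, πC)) _ _ fun _ => rfl).symm

end Anonymization

/-- Theorem 1 (average-case): for any two-sided strategy-proof randomized matching
mechanism `f` there is a two-sided strategy-proof and anonymous randomized matching
mechanism `g` whose total stability violation over all profiles is no larger. -/
theorem anonymization_average (n m : ℕ) (f : Profile n m → Fin n → Fin m → ℝ)
    (hf : ∀ p, IsRandMatching (f p)) (hsp : TwoSidedSP f) :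
    ∃ g : Profile n m → Fin n → Fin m → ℝ,
      (∀ p, IsRandMatching (g p)) ∧ TwoSidedSP g ∧ Anonymous g ∧
      ∑ p : Profile n m, violation p (g p) ≤ ∑ p : Profile n m, violation p (f p) := by
  have hmatching : anonymize f ∈ Set.univ.pi fun _ => {r | IsRandMatching r} :=
    anonymize_mem (convex_pi fun _ _ => convex_isRandMatching)
      fun πS πC p _ => isRandMatching_twist hf πS πC p
  have hstrategyproof : TwoSidedSP (anonymize f) :=
    anonymize_mem convex_twoSidedSP (twoSidedSP_twist hsp)
  have hviolation : anonymize f ∈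
      {g ∈ Set.univ | ∑ p, violation p (g p) ≤ ∑ p, violation p (f p)} :=
    anonymize_mem (convexOn_sum_violation.convex_le _)
      fun πS πC => ⟨Set.mem_univ _, (sum_violation_twist πS πC f).le⟩
  exact ⟨anonymize f, fun p => hmatching p (Set.mem_univ p), hstrategyproof,
    anonymous_anonymize f, hviolation.2⟩
end

section
/- Suppose n = m. Let f be a two-sided strategy-proof randomized matching mechanism and define g by g(≻)(i,j) = ½·(f(≻)(i,j) + f(≻↔)(j,i)) for every profile ≻ and all i,j ∈ {1,…,n}. Then g is two-sided strategy-proof. -/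
open Finset

/-- The role-swapped profile `≻↔` (students and schools exchange roles). -/
def swapProfile {n : ℕ} (p : Profile n n) : Profile n n := (p.2, p.1)

/-- Symmetry of a mechanism (for balanced markets). -/
def SymmetricMech {n : ℕ} (g : Profile n n → Fin n → Fin n → ℝ) : Prop :=
  ∀ p : Profile n n, ∀ i j, g p i j = g (swapProfile p) j i

section

variable {n m : ℕ}

/-- The mechanism `f` of an `m × n` market, run on an `n × m` market by letting students and
schools exchange roles: the profile is swapped and the resulting matching transposed. The two sides
may differ in size, so the profile is swapped by `Prod.swap`, of which `swapProfile` is the case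
`n = m`. -/
def roleSwap (f : Profile m n → Fin m → Fin n → ℝ) (p : Profile n m) (s : Fin n) (c : Fin m) : ℝ :=
  f p.swap c s

namespace TwoSidedSP

/-- A student's misreport at `p` is a school's misreport at `p.swap`, and vice versa, so the two
halves of two-sided strategy-proofness change places. -/
theorem roleSwap {f : Profile m n → Fin m → Fin n → ℝ} (hf : TwoSidedSP f) :
    TwoSidedSP (roleSwap f) :=
  ⟨fun p => hf.2 p.swap, fun p => hf.1 p.swap⟩

theorem add {f g : Profile n m → Fin n → Fin m → ℝ} (hf : TwoSidedSP f) (hg : TwoSidedSP g) :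
    TwoSidedSP (f + g) := by
  constructor <;> intro p i q j <;> simp only [Pi.add_apply, sum_add_distrib]
  · exact add_le_add (hf.1 p i q j) (hg.1 p i q j)
  · exact add_le_add (hf.2 p i q j) (hg.2 p i q j)

theorem const_smul {f : Profile n m → Fin n → Fin m → ℝ} (hf : TwoSidedSP f) {a : ℝ}
    (ha : 0 ≤ a) : TwoSidedSP (a • f) := by
  constructor <;> intro p i q j <;> simp only [Pi.smul_apply, ← smul_sum]
  · exact smul_le_smul_of_nonneg_left (hf.1 p i q j) ha
  · exact smul_le_smul_of_nonneg_left (hf.2 p i q j) ha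

end TwoSidedSP

theorem symmetrized_mechanism_strategyproof_general {f : Profile n m → Fin n → Fin m → ℝ}
    {h : Profile m n → Fin m → Fin n → ℝ} (hf : TwoSidedSP f) (hh : TwoSidedSP h) {a b : ℝ}
    (ha : 0 ≤ a) (hb : 0 ≤ b) : TwoSidedSP (a • f + b • roleSwap h) :=
  (hf.const_smul ha).add (hh.roleSwap.const_smul hb)

end

/-- Averaging a two-sided strategy-proof randomized matching mechanism with its
role-swapped, transposed version preserves two-sided strategy-proofness. -/
theorem symmetrized_mechanism_strategyproof (n : ℕ) (f : Profile n n → Fin n → Fin n → ℝ)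
    (hf : ∀ p, IsRandMatching (f p)) (hsp : TwoSidedSP f)
    (g : Profile n n → Fin n → Fin n → ℝ)
    (hg : ∀ p i j, g p i j = (f p i j + f (swapProfile p) j i) / 2) :
    TwoSidedSP g := by
  have g_eq : g = (2⁻¹ : ℝ) • f + (2⁻¹ : ℝ) • roleSwap f := by
    ext p i j; rw [hg, add_div, div_eq_inv_mul, div_eq_inv_mul]; rfl
  exact g_eq ▸ symmetrized_mechanism_strategyproof_general hsp hsp (by positivity) (by positivity)
end

section
/- Let n = m = 2 and let g be the deterministic mechanism defined as follows: if at profile ≻ there is a pair (s,c) such that c is student s's most preferred school and s is school c's most preferred student, match s with c and match the remaining student with the remaining school; otherwise match student 1 with her most preferred school and match the remaining student with the remaining school. Then g is two-sided strategy-proof. -/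
open Finset

/-- Blocking pair for a deterministic matching `μ` (a bijection) at profile `p`. -/
abbrev IsBlocking {n : ℕ} (p : Profile n n) (μ : Equiv.Perm (Fin n)) (s c : Fin n) : Prop :=
  p.1 s c < p.1 s (μ s) ∧ p.2 c s < p.2 c (μ.symm c)

/-- The 0–1 matrix encoding of a deterministic matching. -/
def permMatrix {n : ℕ} (μ : Equiv.Perm (Fin n)) : Fin n → Fin n → ℝ :=
  fun s c => if μ s = c then 1 else 0

/-- Algorithm 1 for the 2×2 market: if some student–school pair are each other's top
choice, match them (and the remaining pair); otherwise give student 1 (index 0) her top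
choice and match the remaining pair. -/
noncomputable def mech2 (p : Profile 2 2) : Equiv.Perm (Fin 2) :=
  if h : ∃ s c, (p.1 s).symm 0 = c ∧ (p.2 c).symm 0 = s then
    Equiv.swap h.choose h.choose_spec.choose
  else
    Equiv.swap 0 ((p.1 0).symm 0)

/-!
Call a student and a school a mutual top pair if each ranks the other first. The mechanism matches
every mutual top pair. If there is one, its two members get their first choice, while a misreport by
anyone else leaves it a mutual top pair, so the matching, determined by any one of its pairs, does
not change. If there is none, the students have different top schools and each gets her own: the
students are content, and no report of a school affects the matching.
-/

section PermMatrix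

variable {n : ℕ}

lemma sum_filter_permMatrix_row (μ : Equiv.Perm (Fin n)) (P : Fin n → Prop) [DecidablePred P]
    (s : Fin n) : ∑ c ∈ univ.filter P, permMatrix μ s c = if P (μ s) then 1 else 0 := by
  simp [permMatrix]

lemma sum_filter_permMatrix_col (μ : Equiv.Perm (Fin n)) (P : Fin n → Prop) [DecidablePred P]
    (c : Fin n) : ∑ s ∈ univ.filter P, permMatrix μ s c = if P (μ.symm c) then 1 else 0 := by
  simp [permMatrix, ← Equiv.eq_symm_apply]

lemma ite_one_zero_le_ite_one_zero_iff {R : Type*} [Zero R] [One R] [PartialOrder R]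
    [ZeroLEOneClass R] [NeZero (1 : R)] {P Q : Prop} [Decidable P] [Decidable Q] :
    (if P then (1 : R) else 0) ≤ (if Q then 1 else 0) ↔ (P → Q) := by
  split_ifs <;> simp_all [zero_lt_one.not_ge]

lemma twoSidedSP_permMatrix_iff (g : Profile n n → Equiv.Perm (Fin n)) :
    TwoSidedSP (fun p => permMatrix (g p)) ↔
      (∀ (p : Profile n n) s q, p.1 s (g p s) ≤ p.1 s (g (Function.update p.1 s q, p.2) s)) ∧
      (∀ (p : Profile n n) c q, p.2 c ((g p).symm c) ≤
        p.2 c ((g (p.1, Function.update p.2 c q)).symm c)) := by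
  simp only [TwoSidedSP, sum_filter_permMatrix_row, sum_filter_permMatrix_col,
    ite_one_zero_le_ite_one_zero_iff]
  exact and_congr
    (forall₃_congr fun _ _ _ => ⟨fun h => h _ le_rfl, fun h _ => h.trans⟩)
    (forall₃_congr fun _ _ _ => ⟨fun h => h _ le_rfl, fun h _ => h.trans⟩)

end PermMatrix

section TopChoices

variable {n m : ℕ}

/-- The most preferred school of student `s`: the one she gives rank `0`. -/
def topSchool [NeZero m] (p : Profile n m) (s : Fin n) : Fin m := (p.1 s).symm 0

/-- The most preferred student of school `c`: the one it gives rank `0`. -/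
def topStudent [NeZero n] (p : Profile n m) (c : Fin m) : Fin n := (p.2 c).symm 0

/-- Student `s` and school `c` are each other's most preferred partner. These are the pairs that
`mech2` looks for first. -/
def IsMutualTop [NeZero n] [NeZero m] (p : Profile n m) (s : Fin n) (c : Fin m) : Prop :=
  topSchool p s = c ∧ topStudent p c = s

lemma rank_topSchool_le [NeZero m] (p : Profile n m) (s : Fin n) (c : Fin m) :
    p.1 s (topSchool p s) ≤ p.1 s c := by
  simp [topSchool]

lemma rank_topStudent_le [NeZero n] (p : Profile n m) (c : Fin m) (s : Fin n) :
    p.2 c (topStudent p c) ≤ p.2 c s := by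
  simp [topStudent]

lemma IsMutualTop.update_student [NeZero n] [NeZero m] {p : Profile n m} {s s' : Fin n} {c : Fin m}
    (h : IsMutualTop p s c) (hs : s ≠ s') (q : Equiv.Perm (Fin m)) :
    IsMutualTop (Function.update p.1 s' q, p.2) s c := by
  simpa [IsMutualTop, topSchool, topStudent, hs] using h

lemma IsMutualTop.update_school [NeZero n] [NeZero m] {p : Profile n m} {s : Fin n} {c c' : Fin m}
    (h : IsMutualTop p s c) (hc : c ≠ c') (q : Equiv.Perm (Fin n)) :
    IsMutualTop (p.1, Function.update p.2 c' q) s c := by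
  simpa [IsMutualTop, topSchool, topStudent, hc] using h

lemma topSchool_injective_of_forall_not_isMutualTop [NeZero m] {p : Profile 2 m}
    (h : ∀ s c, ¬ IsMutualTop p s c) : Function.Injective (topSchool p) := by
  intro s s' hss'
  by_contra hne
  -- A shared top school forms a mutual top pair with whichever of the two students it prefers.
  obtain hs | hs : topStudent p (topSchool p s) = s ∨ topStudent p (topSchool p s) = s' := by
    lia
  · exact h s (topSchool p s) ⟨rfl, hs⟩
  · exact h s' (topSchool p s) ⟨hss'.symm, hs⟩

end TopChoices

section Mech2

variable {p p' : Profile 2 2} {s c : Fin 2}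

lemma fin_two_eq_of_injective_of_apply_eq {f g : Fin 2 → Fin 2} (hf : Function.Injective f)
    (hg : Function.Injective g) {i : Fin 2} (hi : f i = g i) : f = g := by
  funext j
  obtain rfl | hj := eq_or_ne j i
  · exact hi
  · have hfj : f j ≠ f i := hf.ne hj
    have hgj : g j ≠ g i := hg.ne hj
    lia

lemma exists_isMutualTop_mech2_apply_eq (h : ∃ s c, IsMutualTop p s c) :
    ∃ s c, IsMutualTop p s c ∧ mech2 p s = c := by
  refine ⟨h.choose, h.choose_spec.choose, h.choose_spec.choose_spec, ?_⟩
  have hμ : mech2 p = Equiv.swap h.choose h.choose_spec.choose := dif_pos h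
  rw [hμ, Equiv.swap_apply_left]

lemma mech2_zero_of_forall_not_isMutualTop (h : ∀ s c, ¬ IsMutualTop p s c) :
    mech2 p 0 = topSchool p 0 := by
  have hμ : mech2 p = Equiv.swap 0 (topSchool p 0) := dif_neg fun ⟨s, c, hsc⟩ => h s c hsc
  rw [hμ, Equiv.swap_apply_left]

lemma IsMutualTop.mech2_apply (h : IsMutualTop p s c) : mech2 p s = c := by
  obtain ⟨s', c', h', hμ⟩ := exists_isMutualTop_mech2_apply_eq ⟨s, c, h⟩
  obtain rfl | hs := eq_or_ne s s'
  · exact hμ.trans (h'.1.symm.trans h.1)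
  · have hc : c ≠ c' := by
      rintro rfl
      exact hs (h.2.symm.trans h'.2)
    have hμs : mech2 p s ≠ c' := hμ ▸ (mech2 p).injective.ne hs
    lia

lemma mech2_eq_of_isMutualTop (h : IsMutualTop p s c) (h' : IsMutualTop p' s c) :
    mech2 p = mech2 p' :=
  DFunLike.coe_injective <|
    fin_two_eq_of_injective_of_apply_eq (mech2 p).injective (mech2 p').injective
      (h.mech2_apply.trans h'.mech2_apply.symm)

lemma mech2_eq_topSchool_of_injective (h : Function.Injective (topSchool p)) :
    ⇑(mech2 p) = topSchool p := by
  obtain ⟨s, hs⟩ : ∃ s, mech2 p s = topSchool p s := by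
    by_cases hp : ∃ s c, IsMutualTop p s c
    · obtain ⟨s, c, hsc⟩ := hp
      exact ⟨s, hsc.mech2_apply.trans hsc.1.symm⟩
    · push Not at hp
      exact ⟨0, mech2_zero_of_forall_not_isMutualTop hp⟩
  exact fin_two_eq_of_injective_of_apply_eq (mech2 p).injective h hs

lemma rank_mech2_le_update_student (p : Profile 2 2) (s : Fin 2) (q : Equiv.Perm (Fin 2)) :
    p.1 s (mech2 p s) ≤ p.1 s (mech2 (Function.update p.1 s q, p.2) s) := by
  by_cases hp : ∃ s₀ c₀, IsMutualTop p s₀ c₀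
  · obtain ⟨s₀, c₀, h⟩ := hp
    obtain rfl | hs := eq_or_ne s₀ s
    · rw [h.mech2_apply, ← h.1]
      exact rank_topSchool_le p s₀ _
    · rw [mech2_eq_of_isMutualTop h (h.update_student hs q)]
  · push Not at hp
    rw [mech2_eq_topSchool_of_injective (topSchool_injective_of_forall_not_isMutualTop hp)]
    exact rank_topSchool_le p s _

lemma rank_mech2_symm_le_update_school (p : Profile 2 2) (c : Fin 2) (q : Equiv.Perm (Fin 2)) :
    p.2 c ((mech2 p).symm c) ≤ p.2 c ((mech2 (p.1, Function.update p.2 c q)).symm c) := by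
  by_cases hp : ∃ s₀ c₀, IsMutualTop p s₀ c₀
  · obtain ⟨s₀, c₀, h⟩ := hp
    obtain rfl | hc := eq_or_ne c₀ c
    · rw [(Equiv.symm_apply_eq _).2 h.mech2_apply.symm, ← h.2]
      exact rank_topStudent_le p c₀ _
    · rw [mech2_eq_of_isMutualTop h (h.update_school hc q)]
  · push Not at hp
    have hinj : Function.Injective (topSchool p) :=
      topSchool_injective_of_forall_not_isMutualTop hp
    have hμ : mech2 p = mech2 (p.1, Function.update p.2 c q) :=
      DFunLike.coe_injective <|
        (mech2_eq_topSchool_of_injective hinj).trans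
          (mech2_eq_topSchool_of_injective (p := (p.1, Function.update p.2 c q)) hinj).symm
    rw [hμ]

end Mech2

/-- Algorithm 1 is two-sided strategy-proof. -/
theorem mech2_strategyproof : TwoSidedSP (fun p => permMatrix (mech2 p)) :=
  (twoSidedSP_permMatrix_iff mech2).2
    ⟨rank_mech2_le_update_student, rank_mech2_symm_le_update_school⟩
end

section
/- Let n = m = 3 and let g be the deterministic mechanism defined as follows at profile ≻: first match student 1 with her most preferred school and remove both; among the remaining two students {s,s'} and two schools {c,c'}, if some remaining pair (s,c) satisfies c ≻_s c' and s ≻_c s' (where s' and c' are the other remaining student and school), match s with c and s' with c'; otherwise match student 2 with her preferred remaining school and student 3 with the last school. Then g is two-sided strategy-proof. -/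
/-!
Once student 0 has taken her top school `t`, only two matchings remain, and in the group `Fin 3`
they are `s ↦ t + s` (straight) and `s ↦ t - s` (crossed). Each agent votes for the one that gives
her the better partner, and the mechanism picks the straight matching iff the votes for it include
those of students 1 and 2, or of student 1 and school `t + 1`, or of student 2 and school `t + 2`.
This condition is monotone in the votes, and in a monotone vote between two alternatives a false
vote can only hurt the voter. Student 0, the only agent whose report affects `t`, always gets her
top school.
-/

open Finset

/-- Algorithm 2 for the 3×3 market.  Student 1 (index 0) is matched to her top choice
`t`; the remaining schools are `t+1` and `t+2` and the remaining students are indices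
1 and 2.  If a remaining pair (s,c) mutually prefers each other to the other remaining
student/school, match them (and the other pair); otherwise student 2 (index 1) gets her
preferred remaining school and student 3 (index 2) the last one. -/
def mech3 (p : Profile 3 3) : Fin 3 → Fin 3 :=
  let t := (p.1 0).symm 0
  let x := t + 1
  let y := t + 2
  if p.1 1 x < p.1 1 y ∧ p.2 x 1 < p.2 x 2 then ![t, x, y]
  else if p.1 1 y < p.1 1 x ∧ p.2 y 1 < p.2 y 2 then ![t, y, x]
  else if p.1 2 x < p.1 2 y ∧ p.2 x 2 < p.2 x 1 then ![t, y, x]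
  else if p.1 2 y < p.1 2 x ∧ p.2 y 2 < p.2 y 1 then ![t, x, y]
  else if p.1 1 x < p.1 1 y then ![t, x, y] else ![t, y, x]

/-- The 0–1 matrix encoding of a deterministic assignment. -/
def funMatrix {n : ℕ} (μ : Fin n → Fin n) : Fin n → Fin n → ℝ :=
  fun s c => if μ s = c then 1 else 0

section Deterministic

variable {n : ℕ}

lemma funMatrix_symm (σ : Equiv.Perm (Fin n)) (s c : Fin n) :
    funMatrix σ.symm c s = funMatrix σ s c := by
  simp only [funMatrix, Equiv.symm_apply_eq, eq_comm (a := c)]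

lemma sum_funMatrix (μ : Fin n → Fin n) (s : Fin n) (A : Finset (Fin n)) :
    ∑ c ∈ A, funMatrix μ s c = if μ s ∈ A then 1 else 0 :=
  sum_ite_eq A (μ s) fun _ => 1

lemma sum_funMatrix_le_of_rank_le {β : Type*} [Preorder β] [DecidableLE β] {r : Fin n → β}
    {μ ν : Fin n → Fin n} {s : Fin n} (h : r (μ s) ≤ r (ν s)) (c : Fin n) :
    ∑ c' ∈ univ.filter (fun c' => r c' ≤ r c), funMatrix ν s c'
      ≤ ∑ c' ∈ univ.filter (fun c' => r c' ≤ r c), funMatrix μ s c' := by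
  simp only [sum_funMatrix, mem_filter, mem_univ, true_and]
  split_ifs with hν hμ
  exacts [le_rfl, absurd (h.trans hν) hμ, zero_le_one, le_rfl]

lemma twoSidedSP_funMatrix_of_rank_le {g : Profile n n → Equiv.Perm (Fin n)}
    (hS : ∀ (p : Profile n n) s q, p.1 s (g p s) ≤ p.1 s (g (Function.update p.1 s q, p.2) s))
    (hC : ∀ (p : Profile n n) c q,
      p.2 c ((g p).symm c) ≤ p.2 c ((g (p.1, Function.update p.2 c q)).symm c)) :
    TwoSidedSP fun p => funMatrix (g p) := by
  refine ⟨fun p s q => sum_funMatrix_le_of_rank_le (hS p s q), fun p c q => ?_⟩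
  simp only [← funMatrix_symm _ _ c]
  exact sum_funMatrix_le_of_rank_le (hC p c q)

end Deterministic

section Voting

variable {ι α β F : Type*} [FunLike F α β]

/-- The votes in a choice between two alternatives that give agent `i` the partner `a i` and `b i`
respectively: `Favours r a b i` says that `i` strictly prefers the first one. As in `Profile`, the
lower rank is the preferred one. -/
def Favours [LT β] (r : ι → F) (a b : ι → α) (i : ι) : Prop :=
  r i (a i) < r i (b i)

lemma favours_update [LT β] [DecidableEq ι] (r : ι → F) (a b : ι → α) (i : ι) (q : F) :
    Favours (Function.update r i q) a b
      = Function.update (Favours r a b) i (q (a i) < q (b i)) :=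
  funext fun j => Function.apply_update (fun j (rj : F) => rj (a j) < rj (b j)) r i q j

lemma rank_ite_le_rank_ite [LinearOrder β] {P P' : Prop} [Decidable P] [Decidable P']
    {r : α → β} {x y : α} (hlt : r x < r y → P' → P) (hle : r y ≤ r x → P → P') :
    r (if P then x else y) ≤ r (if P' then x else y) := by
  split_ifs with hP hP' hP'
  · exact le_rfl
  · exact not_lt.1 fun h => hP' (hle h.le hP)
  · exact not_lt.1 fun h => hP (hlt h hP')
  · exact le_rfl

lemma rank_vote_le_rank_vote_update [LinearOrder β] [DecidableEq ι] {f : (ι → Prop) → Prop}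
    [DecidablePred f] (hf : Monotone f) (r : ι → F) (a b : ι → α) (i : ι) (q : F) :
    r i (if f (Favours r a b) then a i else b i)
      ≤ r i (if f (Favours (Function.update r i q) a b) then a i else b i) := by
  rw [favours_update]
  refine rank_ite_le_rank_ite (fun hlt => ?_) (fun hle => ?_)
  · exact hf (update_le_self_iff.2 fun _ => hlt)
  · exact hf (le_update_self_iff.2 fun h => absurd h hle.not_gt)

lemma rank_lt_iff_not_rank_lt_of_ne [LinearOrder β] [EmbeddingLike F α β] {r : F} {x y : α}
    (h : x ≠ y) : r y < r x ↔ ¬ r x < r y :=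
  ((EmbeddingLike.injective r).ne h.symm).le_iff_lt.symm.trans not_lt.symm

end Voting

section Mech3

/-- The matching of students 0, 1, 2 with schools `t`, `t + 1`, `t + 2`: one of the two
outcomes that Algorithm 2 can have when student 0 takes school `t`. -/
def straight (t : Fin 3) : Equiv.Perm (Fin 3) :=
  Equiv.addLeft t

/-- The matching of students 0, 1, 2 with schools `t`, `t + 2`, `t + 1`, the other outcome.
The formula is `s ↦ t - s`, since `-1 = 2` in `Fin 3`. -/
def crossed (t : Fin 3) : Equiv.Perm (Fin 3) :=
  Equiv.subLeft t

lemma coe_straight (t : Fin 3) : ⇑(straight t) = ![t, t + 1, t + 2] := by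
  revert t; decide

lemma coe_crossed (t : Fin 3) : ⇑(crossed t) = ![t, t + 2, t + 1] := by
  revert t; decide

/-- The voting rule by which Algorithm 2 decides for the straight matching once student 0 has taken
school `t`; `v s` and `w c` are the votes of student `s` and school `c` for that matching. -/
def StraightRule (t : Fin 3) (v w : Fin 3 → Prop) : Prop :=
  v 1 ∧ v 2 ∨ v 1 ∧ w (t + 1) ∨ v 2 ∧ w (t + 2)

lemma StraightRule.mono {t : Fin 3} {v v' w w' : Fin 3 → Prop} (hv : v ≤ v') (hw : w ≤ w') :
    StraightRule t v w → StraightRule t v' w' :=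
  Or.imp (And.imp (hv 1) (hv 2)) (Or.imp (And.imp (hv 1) (hw _)) (And.imp (hv 2) (hw _)))

/-- The votes of the students for `straight t` against `crossed t`. -/
abbrev studentVotes (p : Profile 3 3) (t : Fin 3) : Fin 3 → Prop :=
  Favours p.1 (straight t) (crossed t)

/-- The votes of the schools for `straight t` against `crossed t`. -/
abbrev schoolVotes (p : Profile 3 3) (t : Fin 3) : Fin 3 → Prop :=
  Favours p.2 (straight t).symm (crossed t).symm

open Classical in
/-- Algorithm 2 as a vote between the two matchings that give student 0 her top school, with values
in permutations so that the student matched with a school is given by the inverse. -/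
noncomputable def mech3Perm (p : Profile 3 3) : Equiv.Perm (Fin 3) :=
  let t := (p.1 0).symm 0
  if StraightRule t (studentVotes p t) (schoolVotes p t) then straight t else crossed t

lemma studentVotes_one_iff (p : Profile 3 3) (t : Fin 3) :
    studentVotes p t 1 ↔ p.1 1 (t + 1) < p.1 1 (t + 2) := by
  simp [studentVotes, Favours, coe_straight, coe_crossed]

lemma studentVotes_two_iff (p : Profile 3 3) (t : Fin 3) :
    studentVotes p t 2 ↔ p.1 2 (t + 2) < p.1 2 (t + 1) := by
  simp [studentVotes, Favours, coe_straight, coe_crossed]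

lemma schoolVotes_add_one_iff (p : Profile 3 3) (t : Fin 3) :
    schoolVotes p t (t + 1) ↔ p.2 (t + 1) 1 < p.2 (t + 1) 2 := by
  have hs : (straight t).symm (t + 1) = 1 := by revert t; decide
  have hc : (crossed t).symm (t + 1) = 2 := by revert t; decide
  rw [schoolVotes, Favours, hs, hc]

lemma schoolVotes_add_two_iff (p : Profile 3 3) (t : Fin 3) :
    schoolVotes p t (t + 2) ↔ p.2 (t + 2) 2 < p.2 (t + 2) 1 := by
  have hs : (straight t).symm (t + 2) = 2 := by revert t; decide
  have hc : (crossed t).symm (t + 2) = 1 := by revert t; decide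
  rw [schoolVotes, Favours, hs, hc]

lemma coe_mech3Perm (p : Profile 3 3) : ⇑(mech3Perm p) = mech3 p := by
  have hne : (p.1 0).symm 0 + 1 ≠ (p.1 0).symm 0 + 2 := by simp
  -- Rankings are strict, so voting for one matching is not voting for the other: both sides become
  -- conditionals on Boolean combinations of the same four votes.
  simp only [mech3, mech3Perm, StraightRule, studentVotes_one_iff, studentVotes_two_iff,
    schoolVotes_add_one_iff, schoolVotes_add_two_iff, apply_ite DFunLike.coe, coe_straight,
    coe_crossed, rank_lt_iff_not_rank_lt_of_ne hne,
    rank_lt_iff_not_rank_lt_of_ne (show (1 : Fin 3) ≠ 2 by decide)]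
  split_ifs <;> tauto

lemma mech3Perm_apply_zero (p : Profile 3 3) : mech3Perm p 0 = (p.1 0).symm 0 := by
  rw [mech3Perm]
  split_ifs
  exacts [add_zero _, sub_zero _]

lemma rank_mech3Perm_student_le (p : Profile 3 3) (s : Fin 3) (q : Equiv.Perm (Fin 3)) :
    p.1 s (mech3Perm p s) ≤ p.1 s (mech3Perm (Function.update p.1 s q, p.2) s) := by
  classical
  rcases eq_or_ne s 0 with rfl | hs
  · rw [mech3Perm_apply_zero, Equiv.apply_symm_apply]
    exact Fin.zero_le _
  · set t := (p.1 0).symm 0 with ht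
    have hmono : Monotone fun v => StraightRule t v (schoolVotes p t) :=
      fun _ _ h => StraightRule.mono h le_rfl
    have ht' : (Function.update p.1 s q 0).symm 0 = t := by
      rw [Function.update_of_ne hs.symm]
    simpa only [mech3Perm, ht', ← ht, apply_ite DFunLike.coe, ite_apply] using
      rank_vote_le_rank_vote_update hmono p.1 (straight t) (crossed t) s q

lemma rank_mech3Perm_school_le (p : Profile 3 3) (c : Fin 3) (q : Equiv.Perm (Fin 3)) :
    p.2 c ((mech3Perm p).symm c)
      ≤ p.2 c ((mech3Perm (p.1, Function.update p.2 c q)).symm c) := by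
  classical
  set t := (p.1 0).symm 0
  have hmono : Monotone (StraightRule t (studentVotes p t)) := fun _ _ => StraightRule.mono le_rfl
  simpa only [mech3Perm, apply_ite Equiv.symm, apply_ite DFunLike.coe, ite_apply] using
    rank_vote_le_rank_vote_update hmono p.2 (straight t).symm (crossed t).symm c q

end Mech3

/-- Algorithm 2 is two-sided strategy-proof. -/
theorem mech3_strategyproof : TwoSidedSP (fun p => funMatrix (mech3 p)) := by
  simp only [← coe_mech3Perm]
  exact twoSidedSP_funMatrix_of_rank_le rank_mech3Perm_student_le rank_mech3Perm_school_le
end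

section
/- Let n = m = 3 and let g be the deterministic mechanism defined as follows at profile ≻: first match student 1 with her most preferred school and remove both; among the remaining two students {s,s'} and two schools {c,c'}, if some remaining pair (s,c) satisfies c ≻_s c' and s ≻_c s', match s with c and s' with c'; otherwise match student 2 with her preferred remaining school and student 3 with the last school. Then at every profile ≻ the matching g(≻) has at most 2 blocking pairs. -/
/-!
Student `0` holds her favourite school `t`, so she blocks with no school. For the two students and
two schools left over, the mechanism picks a matching that no pair among them blocks: a mutually
preferred pair is matched whenever there is one, and otherwise student `1` has the school she
prefers, while student `2` cannot block with it because that would make a mutually preferred pair.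
Hence only `(1, t)` and `(2, t)` can block.
-/

open Finset

section Profiles

variable {n m : ℕ} {p : Profile n m} {s s' : Fin n} {c c' : Fin m}

/-- In the submarket with students `s`, `s'` and schools `c`, `c'`, the pair `(s, c)` is mutually
preferred. This is the test that `mech3` applies to each of the remaining pairs. -/
def MutuallyPrefer (p : Profile n m) (s : Fin n) (c : Fin m) (s' : Fin n) (c' : Fin m) : Prop :=
  p.1 s c < p.1 s c' ∧ p.2 c s < p.2 c s'

/-- Stability of the matching `s ↦ c`, `s' ↦ c'` within the submarket of these two students and
two schools: neither `(s, c')` nor `(s', c)` is mutually preferred. -/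
def PairStable (p : Profile n m) (s : Fin n) (c : Fin m) (s' : Fin n) (c' : Fin m) : Prop :=
  ¬ MutuallyPrefer p s c' s' c ∧ ¬ MutuallyPrefer p s' c s c'

lemma PairStable.symm (h : PairStable p s c s' c') : PairStable p s' c' s c :=
  And.symm h

lemma MutuallyPrefer.pairStable (h : MutuallyPrefer p s c s' c') : PairStable p s c s' c' :=
  ⟨fun h' => lt_asymm h.1 h'.1, fun h' => lt_asymm h.2 h'.2⟩

lemma pairStable_of_lt (hs : p.1 s c < p.1 s c') (hs' : ¬ MutuallyPrefer p s' c s c') :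
    PairStable p s c s' c' :=
  ⟨fun h => lt_asymm hs h.1, hs'⟩

end Profiles

section Blocking

variable {n : ℕ} {p : Profile n n} {μ : Equiv.Perm (Fin n)} {s s' : Fin n}

lemma isBlocking_apply_iff : IsBlocking p μ s (μ s') ↔ MutuallyPrefer p s (μ s') s' (μ s) := by
  rw [IsBlocking, Equiv.symm_apply_apply, MutuallyPrefer]

lemma not_isBlocking_apply_self : ¬ IsBlocking p μ s (μ s) :=
  fun h => lt_irrefl _ h.1

lemma not_isBlocking_of_forall_le (h : ∀ c, p.1 s (μ s) ≤ p.1 s c) (c : Fin n) :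
    ¬ IsBlocking p μ s c :=
  fun hb => (h c).not_gt hb.1

lemma PairStable.not_isBlocking {a b : Fin n} (h : PairStable p a (μ a) b (μ b))
    (hs : s = a ∨ s = b) (hs' : s' = a ∨ s' = b) : ¬ IsBlocking p μ s (μ s') := by
  rcases hs with rfl | rfl <;> rcases hs' with rfl | rfl
  · exact not_isBlocking_apply_self
  · exact isBlocking_apply_iff.not.mpr h.1
  · exact isBlocking_apply_iff.not.mpr h.2
  · exact not_isBlocking_apply_self

lemma setOf_isBlocking_subset_compl_prod (htop : ∀ c, p.1 s (μ s) ≤ p.1 s c)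
    (hrest : ∀ a ≠ s, ∀ b ≠ s, ¬ IsBlocking p μ a (μ b)) :
    {ac : Fin n × Fin n | IsBlocking p μ ac.1 ac.2} ⊆ {s}ᶜ ×ˢ {μ s} := by
  rintro ⟨a, c⟩ hac
  obtain ⟨b, rfl⟩ := μ.surjective c
  have ha : a ≠ s := by
    rintro rfl
    exact not_isBlocking_of_forall_le htop _ hac
  have hb : b = s := by
    by_contra hb
    exact hrest a ha b hb hac
  exact ⟨ha, congrArg μ hb⟩

lemma ncard_setOf_isBlocking_le (htop : ∀ c, p.1 s (μ s) ≤ p.1 s c)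
    (hrest : ∀ a ≠ s, ∀ b ≠ s, ¬ IsBlocking p μ a (μ b)) :
    {ac : Fin n × Fin n | IsBlocking p μ ac.1 ac.2}.ncard ≤ n - 1 :=
  calc {ac : Fin n × Fin n | IsBlocking p μ ac.1 ac.2}.ncard
      ≤ (({s}ᶜ : Set (Fin n)) ×ˢ {μ s}).ncard :=
        Set.ncard_le_ncard (setOf_isBlocking_subset_compl_prod htop hrest)
    _ = n - 1 := by
        rw [Set.ncard_prod, Set.ncard_compl, Set.ncard_singleton, Set.ncard_singleton,
          Nat.card_fin, mul_one]

end Blocking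

lemma mech3_zero (p : Profile 3 3) : mech3 p 0 = (p.1 0).symm 0 := by
  unfold mech3
  split_ifs <;> rfl

lemma mech3_zero_le (p : Profile 3 3) (c : Fin 3) : p.1 0 (mech3 p 0) ≤ p.1 0 c := by
  rw [mech3_zero, Equiv.apply_symm_apply]
  exact Fin.zero_le _

lemma mech3_pairStable (p : Profile 3 3) : PairStable p 1 (mech3 p 1) 2 (mech3 p 2) := by
  unfold mech3
  split_ifs with h1x h1y h2x h2y hlt
  · exact MutuallyPrefer.pairStable h1x
  · exact MutuallyPrefer.pairStable h1y
  · exact (MutuallyPrefer.pairStable h2x).symm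
  · exact (MutuallyPrefer.pairStable h2y).symm
  · exact pairStable_of_lt hlt h2x
  · have hne : (p.1 0).symm 0 + 2 ≠ (p.1 0).symm 0 + 1 := by simp
    exact pairStable_of_lt (((p.1 1).injective.ne hne).lt_of_le (not_lt.mp hlt)) h2y

/-- At every profile, the matching produced by Algorithm 2 has at most 2 blocking
pairs. -/
theorem mech3_at_most_two_blocking :
    ∀ p : Profile 3 3, ∀ e : Equiv.Perm (Fin 3), (∀ i, e i = mech3 p i) →
      {sc : Fin 3 × Fin 3 | IsBlocking p e sc.1 sc.2}.ncard ≤ 2 := by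
  intro p e he
  refine ncard_setOf_isBlocking_le (s := 0) ?_ fun a ha b hb => ?_
  · rw [he]
    exact mech3_zero_le p
  · have hstable : PairStable p 1 (e 1) 2 (e 2) := by
      rw [he, he]
      exact mech3_pairStable p
    exact hstable.not_isBlocking (by omega) (by omega)
end

section
/- For n = m = 3, every two-sided strategy-proof deterministic matching mechanism admits some preference profile at which its output matching has at least 2 blocking pairs; i.e., no two-sided strategy-proof deterministic mechanism has worst-case number of blocking pairs less than or equal to 1. -/
/-!
Suppose every output has at most one blocking pair, so that only a few matchings are possible at
each profile. Strategy-proofness links the outputs at any two profiles that differ in the report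
of a single agent: judged by its report at either profile, the agent weakly prefers its partner
there to its partner at the other one. Hence the mechanism solves a finite constraint problem.
This problem is contradictory: seventeen pairs of a profile and a matching can be ruled out one
after the other, each by branching over the outputs at no more than seven further profiles while
using what has been ruled out before, and then no output is left for one of the profiles.
-/

open Finset

/-- A deterministic matching output: 0–1 entries with at most one 1 in each row and
each column (agents may remain unmatched). -/
def IsDetOutput {n m : ℕ} (r : Fin n → Fin m → ℝ) : Prop :=
  (∀ s c, r s c = 0 ∨ r s c = 1) ∧ (∀ s, ∑ c, r s c ≤ 1) ∧ (∀ c, ∑ s, r s c ≤ 1)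

/-- `(s,c)` blocks the deterministic output `r` at profile `p`: they are not matched
to each other, `s` prefers `c` to her assignment (or is unmatched), and `c` prefers
`s` to its assignment (or is unmatched). -/
def BlockingDet {n m : ℕ} (p : Profile n m) (r : Fin n → Fin m → ℝ)
    (s : Fin n) (c : Fin m) : Prop :=
  r s c = 0 ∧ (∀ c', r s c' = 1 → p.1 s c < p.1 s c') ∧
    (∀ s', r s' c = 1 → p.2 c s < p.2 c s')

namespace MatchingMarket

section ConstraintProblem

variable {X Y : Type*} (dom : X → List Y) (C : X × Y → X × Y → Prop)

/-- A solution of the constraint problem with variables `X` and values `Y` given by the unary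
constraints `dom` and the binary constraints `C`. -/
def IsSolution (f : X → Y) : Prop :=
  (∀ x, f x ∈ dom x) ∧ ∀ x x', C (x, f x) (x', f x')

/-- Branching over the values of the variables `xs`, in this order, closes every branch: no choice
of values that avoids the assignments in `E` satisfies the binary constraints together with the
assignments in `path`. -/
def Closes (E : List (X × Y)) : List (X × Y) → List X → Prop
  | _, [] => False
  | path, x :: xs =>
    ∀ y ∈ dom x, (∀ e ∈ path, C e (x, y)) → (x, y) ∉ E → Closes E ((x, y) :: path) xs

/-- One step of a refutation: assigning `value` to the variable `var` is to be ruled out by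
branching over the variables `branch`. -/
structure Exclusion (X Y : Type*) where
  var : X
  value : Y
  branch : List X

/-- The steps `rs` rule out their assignments one after the other, given that those in `E` have been
ruled out before, and in the end no value is left for the variable `x₀`. -/
def IsRefutation (x₀ : X) : List (X × Y) → List (Exclusion X Y) → Prop
  | E, [] => ∀ y ∈ dom x₀, (x₀, y) ∈ E
  | E, r :: rs =>
    Closes dom C E [(r.var, r.value)] r.branch ∧ IsRefutation x₀ ((r.var, r.value) :: E) rs

variable {dom C}

instance Closes.decidable [DecidableEq X] [DecidableEq Y] [DecidableRel C] (E : List (X × Y)) :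
    ∀ path xs, Decidable (Closes dom C E path xs)
  | _, [] => inferInstanceAs (Decidable False)
  | path, x :: xs =>
    have := fun y => Closes.decidable E ((x, y) :: path) xs
    inferInstanceAs (Decidable (∀ y ∈ dom x, _ → _ → _))

instance IsRefutation.decidable [DecidableEq X] [DecidableEq Y] [DecidableRel C] (x₀ : X) :
    ∀ E rs, Decidable (IsRefutation dom C x₀ E rs)
  | E, [] => inferInstanceAs (Decidable (∀ y ∈ dom x₀, (x₀, y) ∈ E))
  | E, r :: rs =>
    have := IsRefutation.decidable x₀ ((r.var, r.value) :: E) rs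
    inferInstanceAs (Decidable (_ ∧ _))

variable {E path : List (X × Y)} {f : X → Y}

theorem IsSolution.not_closes (hf : IsSolution dom C f) (hE : ∀ x, (x, f x) ∉ E) {xs : List X}
    (hpath : ∀ e ∈ path, f e.1 = e.2) : ¬ Closes dom C E path xs := by
  induction xs generalizing path with
  | nil => exact id
  | cons x xs ih =>
    intro h
    have hlinked : ∀ e ∈ path, C e (x, f x) := fun e he => by
      simpa only [hpath e he] using hf.2 e.1 x
    exact ih (List.forall_mem_cons.2 ⟨rfl, hpath⟩) (h (f x) (hf.1 x) hlinked (hE x))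

theorem IsSolution.not_isRefutation (hf : IsSolution dom C f) {x₀ : X}
    {rs : List (Exclusion X Y)} (hE : ∀ x, (x, f x) ∉ E) : ¬ IsRefutation dom C x₀ E rs := by
  induction rs generalizing E with
  | nil => exact fun h => hE x₀ (h (f x₀) (hf.1 x₀))
  | cons r rs ih =>
    rintro ⟨hcloses, hrs⟩
    have hne : f r.var ≠ r.value := fun h =>
      hf.not_closes hE (List.forall_mem_singleton.2 h) hcloses
    refine ih (fun x hx => ?_) hrs
    rcases List.mem_cons.1 hx with hx | hx
    · obtain ⟨rfl, hvalue⟩ := Prod.mk.inj hx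
      exact hne hvalue
    · exact hE x hx

end ConstraintProblem

section Matching

variable {α β : Type*}

theorem exists_option_of_rightUnique {R : α → β → Prop} (hR : Relator.RightUnique R) :
    ∃ f : α → Option β, ∀ a b, f a = some b ↔ R a b := by
  classical
  refine ⟨fun a => if h : ∃ b, R a b then some h.choose else none, fun a b => ?_⟩
  dsimp only
  split_ifs with h
  · rw [Option.some_inj]
    exact ⟨fun hb => hb ▸ h.choose_spec, hR h.choose_spec⟩
  · simpa using fun hb => h ⟨b, hb⟩

theorem exists_pequiv_of_biUnique {R : α → β → Prop} (hR : Relator.BiUnique R) :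
    ∃ μ : α ≃. β, ∀ a b, μ a = some b ↔ R a b := by
  obtain ⟨f, hf⟩ := exists_option_of_rightUnique hR.2
  obtain ⟨f', hf'⟩ := exists_option_of_rightUnique hR.1.flip
  exact ⟨⟨f, f', fun a b => (hf' b a).trans (hf a b).symm⟩, hf⟩

theorem eq_of_sum_le_one {ι R : Type*} [Fintype ι] [Semiring R] [PartialOrder R]
    [IsStrictOrderedRing R] {v : ι → R} (hv : ∀ i, 0 ≤ v i) (hsum : ∑ i, v i ≤ 1) {i j : ι}
    (hi : v i = 1) (hj : v j = 1) : i = j := by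
  by_contra hij
  have hle := (Finset.add_le_sum (fun k _ => hv k) (mem_univ i) (mem_univ j) hij).trans hsum
  rw [hi, hj] at hle
  exact (lt_add_one (1 : R)).not_ge hle

variable {n m : ℕ}

theorem exists_pequiv_of_isDetOutput {r : Fin n → Fin m → ℝ} (hr : IsDetOutput r) :
    ∃ μ : Fin n ≃. Fin m, r = fun s c => μ.toMatrix s c := by
  obtain ⟨h01, hrow, hcol⟩ := hr
  have hnonneg (s c) : 0 ≤ r s c := by rcases h01 s c with h | h <;> simp [h]
  obtain ⟨μ, hμ⟩ := exists_pequiv_of_biUnique (R := fun s c => r s c = 1)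
    ⟨fun s s' c => eq_of_sum_le_one (fun s => hnonneg s c) (hcol c),
      fun s c c' => eq_of_sum_le_one (hnonneg s) (hrow s)⟩
  refine ⟨μ, funext₂ fun s c => ?_⟩
  rcases h01 s c with h | h <;> simp [PEquiv.toMatrix_apply, hμ, h]

instance : DecidableEq (Fin n ≃. Fin m) := fun μ ν =>
  decidable_of_iff (∀ s, μ s = ν s) PEquiv.ext_iff.symm

end Matching

section Incentives

variable {n m k : ℕ}

/-- The rank of a partner in the ranking `σ`, where being unmatched (`none`) comes last. -/
def rank (σ : Equiv.Perm (Fin k)) (o : Option (Fin k)) : ℕ :=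
  o.elim k fun a => σ a

theorem rank_le (σ : Equiv.Perm (Fin k)) (o : Option (Fin k)) : rank σ o ≤ k := by
  cases o with
  | none => exact le_rfl
  | some a => exact (σ a).is_lt.le

theorem rank_some_lt_iff {σ : Equiv.Perm (Fin k)} {a : Fin k} {o : Option (Fin k)} :
    rank σ (some a) < rank σ o ↔ ∀ b, o = some b → σ a < σ b := by
  cases o <;> simp [rank]

/-- `(s, c)` blocks the matching `μ` at the profile `p`. -/
def Blocks (p : Profile n m) (μ : Fin n ≃. Fin m) (s : Fin n) (c : Fin m) : Prop :=
  rank (p.1 s) (some c) < rank (p.1 s) (μ s) ∧ rank (p.2 c) (some s) < rank (p.2 c) (μ.symm c)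

instance (p : Profile n m) (μ : Fin n ≃. Fin m) (s : Fin n) (c : Fin m) :
    Decidable (Blocks p μ s c) :=
  inferInstanceAs (Decidable (_ ∧ _))

theorem blockingDet_toMatrix_iff {p : Profile n m} {μ : Fin n ≃. Fin m} {s : Fin n} {c : Fin m} :
    BlockingDet p (fun s c => μ.toMatrix s c) s c ↔ Blocks p μ s c := by
  have hne : (∀ c', μ s = some c' → p.1 s c < p.1 s c') → μ s ≠ some c :=
    fun h hc => (h c hc).false
  simp only [BlockingDet, Blocks, rank_some_lt_iff, PEquiv.toMatrix_apply, Option.mem_def,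
    PEquiv.eq_some_iff, ite_eq_left_iff, ite_eq_right_iff, zero_ne_one, one_ne_zero, imp_false,
    not_not]
  exact ⟨And.right, fun h => ⟨hne h.1, h⟩⟩

theorem sum_toMatrix_filter {ι R : Type*} [AddCommMonoidWithOne R] (μ : ι ≃. Fin k)
    (σ : Equiv.Perm (Fin k)) (i : ι) (a : Fin k) :
    ∑ b with σ b ≤ σ a, (μ.toMatrix i b : R) =
      if rank σ (μ i) ≤ rank σ (some a) then 1 else 0 := by
  simp only [PEquiv.toMatrix_apply, Option.mem_def]
  cases h : μ i with
  | none => simp [rank, (σ a).is_lt.not_ge]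
  | some b => simp [rank]

theorem rank_le_rank_of_sum_le {ι : Type*} {μ ν : ι ≃. Fin k} {σ : Equiv.Perm (Fin k)} {i : ι}
    (h : ∀ a, ∑ b with σ b ≤ σ a, (ν.toMatrix i b : ℝ) ≤ ∑ b with σ b ≤ σ a, μ.toMatrix i b) :
    rank σ (μ i) ≤ rank σ (ν i) := by
  cases hν : ν i with
  | none => exact rank_le σ _
  | some a =>
    by_contra hμ
    have := h a
    rw [sum_toMatrix_filter, sum_toMatrix_filter, hν, if_pos le_rfl, if_neg hμ] at this
    exact zero_lt_one.not_ge this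

variable {f : Profile n m → Fin n ≃. Fin m}

theorem rank_student_le_of_twoSidedSP (hf : TwoSidedSP fun p s c => (f p).toMatrix s c)
    (p : Profile n m) (s : Fin n) (q : Equiv.Perm (Fin m)) :
    rank (p.1 s) (f p s) ≤ rank (p.1 s) (f (Function.update p.1 s q, p.2) s) :=
  rank_le_rank_of_sum_le (hf.1 p s q)

theorem rank_school_le_of_twoSidedSP (hf : TwoSidedSP fun p s c => (f p).toMatrix s c)
    (p : Profile n m) (c : Fin m) (q : Equiv.Perm (Fin n)) :
    rank (p.2 c) ((f p).symm c) ≤ rank (p.2 c) ((f (p.1, Function.update p.2 c q)).symm c) := by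
  refine rank_le_rank_of_sum_le fun s => ?_
  simpa only [PEquiv.toMatrix_symm, Matrix.transpose_apply] using hf.2 p c q s

/-- No agent can turn the profile of `e` into that of `e'` by a misreport and thereby get a partner
that it strictly prefers. -/
def NoGain (e e' : Profile n m × (Fin n ≃. Fin m)) : Prop :=
  (∀ s, rank (e.1.1 s) (e'.2 s) < rank (e.1.1 s) (e.2 s) →
      e'.1 ≠ (Function.update e.1.1 s (e'.1.1 s), e.1.2)) ∧
    ∀ c, rank (e.1.2 c) (e'.2.symm c) < rank (e.1.2 c) (e.2.symm c) →
      e'.1 ≠ (e.1.1, Function.update e.1.2 c (e'.1.2 c))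

instance : DecidableRel (NoGain (n := n) (m := m)) := fun _ _ =>
  @instDecidableAnd _ _ inferInstance inferInstance

theorem noGain_of_twoSidedSP (hf : TwoSidedSP fun p s c => (f p).toMatrix s c)
    (p p' : Profile n m) : NoGain (p, f p) (p', f p') := by
  constructor
  · intro s hs (hp' : p' = _)
    rw [hp'] at hs
    exact (rank_student_le_of_twoSidedSP hf p s _).not_gt hs
  · intro c hc (hp' : p' = _)
    rw [hp'] at hc
    exact (rank_school_le_of_twoSidedSP hf p c _).not_gt hc

/-- The constraint that strategy-proofness puts on the outputs at two profiles: misreports do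
not pay in either direction. -/
def Linked (e e' : Profile n m × (Fin n ≃. Fin m)) : Prop :=
  NoGain e e' ∧ NoGain e' e

instance : DecidableRel (Linked (n := n) (m := m)) := fun _ _ =>
  inferInstanceAs (Decidable (_ ∧ _))

end Incentives

section ThreeByThree

open Equiv (Perm swap)

/-- The permutations of `Fin 3` in lexicographic order of their lists of values. -/
def perm : Fin 6 → Perm (Fin 3) :=
  ![1, swap 1 2, swap 0 1, swap 0 1 * swap 1 2, swap 1 2 * swap 0 1, swap 0 2]

/-- The profile in which the students have the rankings numbered `a`, `b`, `c`, and the schools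
those numbered `x`, `y`, `z`. -/
def profile (a b c x y z : Fin 6) : Profile 3 3 :=
  (perm ∘ ![a, b, c], perm ∘ ![x, y, z])

/-- All matchings of three students and three schools, with repetitions: each is a perfect matching
restricted to a set of students. -/
def matchings : List (Fin 3 ≃. Fin 3) :=
  (List.finRange 3).sublists.flatMap fun S =>
    (List.finRange 6).map fun i => (PEquiv.ofSet {s | s ∈ S}).trans (perm i).toPEquiv

theorem mem_matchings (μ : Fin 3 ≃. Fin 3) : μ ∈ matchings := by
  have complete : ∀ x : Fin 3 → Option (Fin 3),
      (∀ s s' c, x s = some c → x s' = some c → s = s') → ∃ ν ∈ matchings, ∀ s, ν s = x s := by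
    decide +kernel
  obtain ⟨ν, hν, hνμ⟩ := complete μ fun _ _ _ => μ.inj
  exact PEquiv.ext hνμ ▸ hν

/-- The matchings with at most one blocking pair at the profile `p`. -/
def candidates (p : Profile 3 3) : List (Fin 3 ≃. Fin 3) :=
  matchings.filter fun μ => #{sc : Fin 3 × Fin 3 | Blocks p μ sc.1 sc.2} ≤ 1

theorem mem_candidates_iff {p : Profile 3 3} {μ : Fin 3 ≃. Fin 3} :
    μ ∈ candidates p ↔
      {sc : Fin 3 × Fin 3 | BlockingDet p (fun s c => μ.toMatrix s c) sc.1 sc.2}.ncard ≤ 1 := by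
  simp only [candidates, List.mem_filter, mem_matchings, true_and, decide_eq_true_eq,
    blockingDet_toMatrix_iff, Set.ncard_eq_toFinset_card', Set.toFinset_ofPred]

/-- A refutation found by computer search; its steps rule out, among others, the five candidates at
`profile 0 0 4 3 0 1`. -/
def exclusions : List (Exclusion (Profile 3 3) (Fin 3 ≃. Fin 3)) := [
  ⟨profile 0 2 4 3 2 1, (perm 1).toPEquiv, [
    profile 0 2 2 3 2 1, profile 0 2 2 5 2 1, profile 0 2 0 5 2 1, profile 0 2 0 3 2 1]⟩,
  ⟨profile 0 0 4 3 0 1, (perm 1).toPEquiv, [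
    profile 0 0 4 3 2 1, profile 0 2 4 3 2 1]⟩,
  ⟨profile 0 0 4 3 0 3, (perm 3).toPEquiv, [
    profile 0 0 4 3 1 3, profile 0 0 4 1 1 3, profile 1 0 4 3 1 3, profile 1 0 4 1 1 3,
    profile 0 0 4 1 0 3]⟩,
  ⟨profile 0 0 4 3 0 1, (perm 3).toPEquiv, [
    profile 0 0 4 3 0 3, profile 0 0 4 3 2 3, profile 0 0 4 3 2 1]⟩,
  ⟨profile 0 0 5 5 0 1, (perm 5).toPEquiv, [
    profile 2 0 5 5 0 1, profile 2 0 5 5 1 1, profile 2 0 5 3 1 1, profile 2 0 3 5 1 1,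
    profile 2 0 3 3 1 1]⟩,
  ⟨profile 0 0 4 3 0 1, (perm 5).toPEquiv, [
    profile 0 0 4 5 0 1, profile 0 0 5 5 0 1, profile 0 0 5 5 0 3, profile 0 0 5 3 0 3,
    profile 0 0 4 3 0 3]⟩,
  ⟨profile 1 4 2 1 1 5, (perm 3).toPEquiv, [
    profile 1 4 4 1 1 5, profile 1 4 4 1 1 3, profile 1 4 2 1 1 3]⟩,
  ⟨profile 0 0 2 1 1 5, (perm 3).toPEquiv, [
    profile 0 0 2 1 0 5, profile 0 4 2 1 1 5, profile 0 4 2 1 0 5, profile 1 4 2 1 1 5,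
    profile 0 4 2 1 2 5, profile 0 0 2 1 2 5]⟩,
  ⟨profile 0 0 4 3 0 1, (perm 2).toPEquiv, [
    profile 0 0 4 1 0 1, profile 0 0 4 1 1 1, profile 0 0 4 1 1 5, profile 0 0 2 1 1 5,
    profile 0 0 2 1 1 1, profile 0 0 2 1 3 1, profile 0 0 4 1 3 1]⟩,
  ⟨profile 0 0 4 3 3 1, (perm 0).toPEquiv, [
    profile 0 0 2 3 3 1, profile 1 0 2 3 3 1, profile 1 0 2 5 3 1, profile 1 0 2 1 3 1,
    profile 1 0 4 3 3 1, profile 0 0 2 1 3 1, profile 1 0 4 5 3 1]⟩,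
  ⟨profile 0 0 4 3 1 1, (perm 0).toPEquiv, [
    profile 0 0 4 3 3 1]⟩,
  ⟨profile 1 5 1 3 0 1, (perm 0).toPEquiv, [
    profile 1 5 1 5 0 1, profile 1 5 1 5 0 0, profile 1 3 1 5 0 1, profile 1 3 1 5 0 0]⟩,
  ⟨profile 0 1 1 3 0 1, (perm 0).toPEquiv, [
    profile 0 5 1 3 0 1, profile 1 5 1 3 0 1, profile 0 5 1 3 0 0, profile 0 1 1 3 0 0]⟩,
  ⟨profile 0 0 2 3 0 1, (perm 0).toPEquiv, [
    profile 0 0 1 3 0 1, profile 0 0 1 5 0 1, profile 0 1 1 5 0 1, profile 0 1 1 3 0 1]⟩,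
  ⟨profile 2 0 2 3 0 3, (perm 5).toPEquiv, [
    profile 2 0 2 3 1 3, profile 2 0 2 5 1 3, profile 2 0 4 5 1 3, profile 2 0 0 5 1 3,
    profile 2 0 2 5 0 3, profile 2 0 0 3 1 3, profile 2 0 4 5 0 3]⟩,
  ⟨profile 0 0 2 3 0 1, (perm 5).toPEquiv, [
    profile 2 0 2 3 0 1, profile 2 0 2 3 0 3, profile 2 0 2 3 1 1, profile 2 0 2 3 1 3,
    profile 2 0 2 5 1 3, profile 2 0 2 5 1 1]⟩,
  ⟨profile 0 0 4 3 0 1, (perm 0).toPEquiv, [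
    profile 0 0 2 3 0 1, profile 0 0 2 3 1 1, profile 0 0 4 3 1 1]⟩]

theorem isRefutation_exclusions :
    IsRefutation candidates Linked (profile 0 0 4 3 0 1) [] exclusions := by
  decide +kernel

theorem exists_isSolution_of_twoSidedSP {g : Profile 3 3 → Fin 3 → Fin 3 → ℝ}
    (hdet : ∀ p, IsDetOutput (g p)) (hsp : TwoSidedSP g)
    (hfew : ∀ p, {sc : Fin 3 × Fin 3 | BlockingDet p (g p) sc.1 sc.2}.ncard ≤ 1) :
    ∃ f, IsSolution candidates Linked f := by
  choose f hf using fun p => exists_pequiv_of_isDetOutput (hdet p)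
  obtain rfl : g = fun p s c => (f p).toMatrix s c := funext hf
  exact ⟨f, fun p => mem_candidates_iff.2 (hfew p),
    fun p p' => ⟨noGain_of_twoSidedSP hsp p p', noGain_of_twoSidedSP hsp p' p⟩⟩

end ThreeByThree

end MatchingMarket

/-- For the 3×3 market, every two-sided strategy-proof deterministic matching mechanism
has a profile at which its output has at least 2 blocking pairs. -/
theorem no_sp_deterministic_with_at_most_one_blocking
    (g : Profile 3 3 → Fin 3 → Fin 3 → ℝ)
    (hdet : ∀ p, IsDetOutput (g p)) (hsp : TwoSidedSP g) :
    ∃ p : Profile 3 3,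
      2 ≤ {sc : Fin 3 × Fin 3 | BlockingDet p (g p) sc.1 sc.2}.ncard := by
  by_contra! hfew
  obtain ⟨f, hf⟩ := MatchingMarket.exists_isSolution_of_twoSidedSP hdet hsp
    fun p => Nat.le_of_lt_succ (hfew p)
  exact hf.not_isRefutation (fun _ => List.not_mem_nil) MatchingMarket.isRefutation_exclusions
end
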